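/- Every finite-dimensional Zinbiel algebra over a field F is sliding; consequently, every finite-dimensional Zinbiel algebra A of dimension d ≥ 2 satisfies l(A) ≤ d. -/

import Mathlib

/-!
Framework: length of finite-dimensional not necessarily associative,
not necessarily unital algebras (non-unital convention: `L_0(S) = 0`).
The multiplication of the algebra is passed explicitly as a binary
operation `μ`, so that the same definitions apply to an algebra, to its
commutator algebra, to a Lie bracket, etc.
-/

open Submodule Module

/-- `IsWord μ S k w`: `w` is a product of `k` elements of `S` (with respect to the
multiplication `μ`) with some placement of parentheses. -/
inductive IsWord {A : Type*} (μ : A → A → A) (S : Set A) : ℕ → A → Prop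
  | base {a : A} (ha : a ∈ S) : IsWord μ S 1 a
  | mul {m n : ℕ} {a b : A} (ha : IsWord μ S m a) (hb : IsWord μ S n b) :
      IsWord μ S (m + n) (μ a b)

/-- The multiplication of an algebra, as a plain binary operation. -/
def amul (A : Type*) [Mul A] : A → A → A := fun a b => a * b

section
variable (F : Type*) {A : Type*} [Field F] [AddCommGroup A] [Module F A]

/-- `L_i(S)`: the linear span of all words in `S` of length at most `i`
(non-unital convention, so `L_0(S) = 0`). -/
def Lset (μ : A → A → A) (S : Set A) (i : ℕ) : Submodule F A :=
  Submodule.span F {a | ∃ k, k ≤ i ∧ IsWord μ S k a}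

/-- `S` generates the algebra, i.e. the span of all words in `S` is everything. -/
def Generates (μ : A → A → A) (S : Set A) : Prop :=
  Submodule.span F {a | ∃ k, IsWord μ S k a} = ⊤

/-- `l(S)`: the length of a generating set `S`, the least `k` with `L_k(S) = A`. -/
noncomputable def lenSet (μ : A → A → A) (S : Set A) : ℕ :=
  sInf {k | Lset F μ S k = ⊤}

/-- An irreducible word of length `k` in `S`. -/
def IrredWord (μ : A → A → A) (S : Set A) (k : ℕ) (w : A) : Prop :=
  IsWord μ S k w ∧ ∀ m, m < k → w ∉ Lset F μ S m

end

section
variable {A : Type*}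

/-- The set `P(x,y,z)` of monomials. -/
def Pset (μ : A → A → A) (x y z : A) : Set A :=
  {μ (μ x z) y, μ (μ z x) y, μ (μ y z) x, μ (μ z y) x,
   μ x (μ z y), μ x (μ y z), μ y (μ x z), μ y (μ z x),
   μ x y, μ y x, μ x z, μ z x, μ y z, μ z y, x, y, z}

/-- The set `Q_l(x,y,z)` of monomials. -/
def Qlset (μ : A → A → A) (x y z : A) : Set A :=
  {μ x (μ z y), μ x (μ y z), μ y (μ x z), μ y (μ z x),
   μ x y, μ y x, μ x z, μ z x, μ y z, μ z y, x, y, z}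

/-- The set `Q_r(x,y,z)` of monomials. -/
def Qrset (μ : A → A → A) (x y z : A) : Set A :=
  {μ (μ x z) y, μ (μ z x) y, μ (μ y z) x, μ (μ z y) x,
   μ x y, μ y x, μ x z, μ z x, μ y z, μ z y, x, y, z}

end

section
variable (F : Type*) {A : Type*} [Field F] [AddCommGroup A] [Module F A]

/-- A mixing algebra: `(xy)z` and `z(xy)` lie in the span of `P(x,y,z)`. -/
def IsMixing (μ : A → A → A) : Prop :=
  ∀ x y z : A, μ (μ x y) z ∈ Submodule.span F (Pset μ x y z) ∧
    μ z (μ x y) ∈ Submodule.span F (Pset μ x y z)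

/-- A sliding algebra: either `z(xy)` always lies in the span of `Q_r(x,y,z)`, or
`(xy)z` always lies in the span of `Q_l(x,y,z)`. -/
def IsSliding (μ : A → A → A) : Prop :=
  (∀ x y z : A, μ z (μ x y) ∈ Submodule.span F (Qrset μ x y z)) ∨
  (∀ x y z : A, μ (μ x y) z ∈ Submodule.span F (Qlset μ x y z))

end

section
variable {F B : Type*} [Field F] [NonUnitalNonAssocRing B] [Module F B] {S : Set B}

/-- In a Zinbiel algebra every word is a generator or a linear combination of words of the
same length whose last factor is a generator. -/
theorem IsWord.mem_or_mem_span_mul_generator [SMulCommClass F B B]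
    (hzinbiel : ∀ x y z : B, x * (y * z) = (x * y + y * x) * z)
    {k : ℕ} {w : B} (hw : IsWord (amul B) S k w) :
    (k = 1 ∧ w ∈ S) ∨ ∃ n, k = n + 1 ∧
      w ∈ span F {v | ∃ u s, IsWord (amul B) S n u ∧ s ∈ S ∧ v = u * s} := by
  induction hw with
  | base ha => exact Or.inl ⟨rfl, ha⟩
  | @mul m n a b ha hb _ ihb =>
    right
    rcases ihb with ⟨rfl, hbS⟩ | ⟨n', rfl, hb'⟩
    · exact ⟨m, rfl, subset_span ⟨a, b, ha, hbS, rfl⟩⟩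
    · refine ⟨m + n', rfl, ?_⟩
      change a * b ∈ _
      clear hb
      induction hb' using span_induction with
      | mem v hv =>
        obtain ⟨u, s, hu, hs, rfl⟩ := hv
        rw [hzinbiel, add_mul]
        refine add_mem (subset_span ⟨_, s, ha.mul hu, hs, rfl⟩)
          (subset_span ⟨_, s, ?_, hs, rfl⟩)
        rw [add_comm]
        exact hu.mul ha
      | zero => simp
      | add x y _ _ hx hy => rw [mul_add]; exact add_mem hx hy
      | smul c x _ hx => rw [mul_smul_comm]; exact smul_mem _ c hx

theorem Lset_mono (μ : B → B → B) (S : Set B) : Monotone (Lset F μ S) :=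
  fun _ _ hij => span_mono fun _ ⟨k, hk, hw⟩ => ⟨k, hk.trans hij, hw⟩

theorem Lset_mul_generator_mem [IsScalarTower F B B] {k : ℕ} {x s : B}
    (hx : x ∈ Lset F (amul B) S k) (hs : s ∈ S) : x * s ∈ Lset F (amul B) S (k + 1) := by
  unfold Lset at hx
  induction hx using span_induction with
  | mem v hv =>
    obtain ⟨m, hm, hv⟩ := hv
    exact subset_span ⟨m + 1, by lia, hv.mul (.base hs)⟩
  | zero => simp
  | add x y _ _ hx hy => rw [add_mul]; exact add_mem hx hy
  | smul c x _ hx => rw [smul_mul_assoc]; exact smul_mem _ c hx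

/-- In a Zinbiel algebra the chain `L_k(S)` reaches the whole algebra as soon as it stops
growing. -/
theorem Lset_eq_top_of_succ_le [SMulCommClass F B B] [IsScalarTower F B B]
    (hzinbiel : ∀ x y z : B, x * (y * z) = (x * y + y * x) * z)
    (hgen : Generates F (amul B) S) {k : ℕ}
    (hk : Lset F (amul B) S (k + 1) ≤ Lset F (amul B) S k) :
    Lset F (amul B) S k = ⊤ := by
  have hword : ∀ n w, IsWord (amul B) S n w → w ∈ Lset F (amul B) S k := by
    intro n
    induction n using Nat.strong_induction_on with
    | _ n ih =>
      intro w hw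
      rcases hw.mem_or_mem_span_mul_generator (F := F) hzinbiel with ⟨-, hwS⟩ | ⟨m, rfl, hwm⟩
      · exact hk (subset_span ⟨1, by lia, .base hwS⟩)
      · refine span_le.2 ?_ hwm
        rintro _ ⟨u, s, hu, hs, rfl⟩
        exact hk (Lset_mul_generator_mem (ih m (by lia) u hu) hs)
  rw [eq_top_iff, ← hgen]
  exact span_le.2 fun w ⟨n, hw⟩ => hword n w hw

theorem le_finrank_Lset_or_eq_top [SMulCommClass F B B] [IsScalarTower F B B]
    [FiniteDimensional F B]
    (hzinbiel : ∀ x y z : B, x * (y * z) = (x * y + y * x) * z)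
    (hgen : Generates F (amul B) S) (k : ℕ) :
    k ≤ finrank F (Lset F (amul B) S k) ∨ Lset F (amul B) S k = ⊤ := by
  induction k with
  | zero => exact Or.inl (Nat.zero_le _)
  | succ k ih =>
    have hle := Lset_mono (F := F) (amul B) S k.le_succ
    by_cases htop : Lset F (amul B) S k = ⊤
    · exact Or.inr (top_le_iff.1 (htop ▸ hle))
    · have hlt := finrank_lt_finrank_of_lt
        (lt_of_le_not_ge hle fun h => htop (Lset_eq_top_of_succ_le hzinbiel hgen h))
      exact Or.inl ((ih.resolve_right htop).trans_lt hlt)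

end

/-- every finite-dimensional Zinbiel algebra is sliding; consequently every
finite-dimensional Zinbiel algebra of dimension `d ≥ 2` has length at most `d`. -/
theorem zinbiel_isSliding_and_length_le_dim
    {F B : Type*} [Field F] [NonUnitalNonAssocRing B] [Module F B]
    [SMulCommClass F B B] [IsScalarTower F B B] [FiniteDimensional F B]
    (hzinbiel : ∀ x y z : B, x * (y * z) = (x * y + y * x) * z) :
    IsSliding F (amul B) ∧
    (2 ≤ finrank F B →
      ∀ S : Set B, S.Finite → Generates F (amul B) S →
        lenSet F (amul B) S ≤ finrank F B) := by
  refine ⟨Or.inl fun x y z => ?_, fun _ S _ hgen => Nat.sInf_le ?_⟩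
  · change z * (x * y) ∈ _
    rw [hzinbiel, add_mul]
    exact add_mem (subset_span (by simp [Qrset, amul])) (subset_span (by simp [Qrset, amul]))
  · rcases le_finrank_Lset_or_eq_top hzinbiel hgen (finrank F B) with h | h
    · exact eq_top_of_finrank_eq (le_antisymm (finrank_le _) h)
    · exact h
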